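/- arXiv:2001.05785 — 2 statements merged into one kernel-verified Lean document; each statement's English description precedes it below -/
import Mathlib

section
/- Let S be the circle ℝ/ℤ and let P be the Markov operator generated by π(y,·) = δ_{2y} for y ∈ [0,1/2) and π(y,·) = (1/2)δ_0 + (1/2)δ_{2y−1} for y ∈ [1/2,1). Then P has the e-property in C_b(S) at every point z whose binary expansion z = Σ_{i≥1} e_i(z)/2^i contains infinitely many digits equal to 1 (i.e., z is not a dyadic rational); that is, for every such z and every bounded continuous f : S → ℝ, lim_{x→z} sup_{n∈ℕ} |Uⁿf(x) − Uⁿf(z)| = 0. -/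
open MeasureTheory Filter Topology

/-- The representative in `[0,1)` of a point of the circle `ℝ/ℤ`. -/
noncomputable def circleRep (x : UnitAddCircle) : ℝ :=
  ((AddCircle.equivIco (1 : ℝ) 0) x : ℝ)

/-- The transition probability function `π(y,·) = δ_{2y}` for `y ∈ [0,1/2)` and
`π(y,·) = (1/2)δ₀ + (1/2)δ_{2y−1}` for `y ∈ [1/2,1)` (arithmetic modulo 1, so that
`δ_{2y−1} = δ_{2y}` on the circle). -/
noncomputable def circleKer (y : UnitAddCircle) : Measure UnitAddCircle :=
  if circleRep y < 1 / 2 then Measure.dirac (y + y)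
  else (1 / 2 : ENNReal) • Measure.dirac (0 : UnitAddCircle) +
    (1 / 2 : ENNReal) • Measure.dirac (y + y)

/-- The `n`-step evolution of a measure under the Markov operator generated by
`circleKer`. -/
noncomputable def circleP : ℕ → Measure UnitAddCircle → Measure UnitAddCircle
  | 0, μ => μ
  | n + 1, μ => (circleP n μ).bind circleKer

/-- The `n`-th iterate of the dual operator: `Uⁿf(x) = ∫ f d(Pⁿδₓ)`. -/
noncomputable def circleU (n : ℕ) (f : UnitAddCircle → ℝ) (x : UnitAddCircle) : ℝ :=
  ∫ y, f y ∂(circleP n (Measure.dirac x))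

/-- The `i`-th binary digit `e_{i+1}(x)` of a real number `x ∈ [0,1)` (the expansion with
infinitely many digits equal to `0`). -/
noncomputable def binDigit (x : ℝ) (i : ℕ) : ℕ := (⌊x * 2 ^ (i + 1)⌋).toNat % 2

/-!
The point `0` is absorbing, and the chain started at `x` either falls into `0` or follows the
doubling map, each binary digit `1` of `x` offering a fresh chance `1/2` to fall. Hence `Pⁿδₓ` gives
mass `2^(-k)` to `2ⁿx` and the rest to `0`, where `k` counts the ones among the first `n` digits of
`x`. Near a nondyadic `z` the first `N` digits do not change, and they contain as many ones as
desired once `N` is large, so `Uⁿf(x) → f(0)` as `n → ∞` and `x → z` jointly. This controls all but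
finitely many of the functions `Uⁿf` near `z`, and each of the remaining ones is continuous at `z`.
-/

open Finset ProbabilityTheory unitInterval

section Equicontinuity

variable {ι X : Type*} [TopologicalSpace X] {z : X}

theorem equicontinuousAt_of_tendsto_cofinite_prod_nhds {α : Type*} [UniformSpace α]
    {u : ι → X → α} {c : α} (hcont : ∀ i, ContinuousAt (u i) z)
    (hlim : Tendsto (fun p : ι × X => u p.1 p.2) (cofinite ×ˢ 𝓝 z) (𝓝 c)) :
    EquicontinuousAt u z := by
  intro V hV
  obtain ⟨W, hW, hWsymm, hWV⟩ := comp_symm_mem_uniformity_sets hV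
  obtain ⟨tail, htail, near, hnear, hclose⟩ :=
    eventually_prod_iff.1 (hlim.eventually (mem_nhds_right c hW))
  have hhead : ∀ᶠ x in 𝓝 z, ∀ i ∈ {i | ¬ tail i}, (u i z, u i x) ∈ V :=
    (eventually_all_finite htail).2 fun i _ => (hcont i).eventually (mem_nhds_left _ hV)
  filter_upwards [hhead, hnear] with x hxhead hx i
  by_cases hi : tail i
  · exact hWV ⟨c, hclose hi hnear.self_of_nhds, hWsymm.symm _ _ (hclose hi hx)⟩
  · exact hxhead i hi

theorem tendsto_iSup_dist_of_equicontinuousAt {α : Type*} [PseudoMetricSpace α]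
    {u : ι → X → α} (h : EquicontinuousAt u z) :
    Tendsto (fun x => ⨆ i, dist (u i x) (u i z)) (𝓝 z) (𝓝 0) := by
  refine Metric.tendsto_nhds.2 fun ε hε => ?_
  filter_upwards [Metric.equicontinuousAt_iff_right.1 h (ε / 2) (half_pos hε)] with x hx
  rw [Real.dist_0_eq_abs, abs_of_nonneg (Real.iSup_nonneg fun _ => dist_nonneg)]
  refine (Real.iSup_le (fun i => ?_) (half_pos hε).le).trans_lt (half_lt_self hε)
  rw [dist_comm]
  exact (hx i).le

end Equicontinuity

theorem tendsto_sum_range_atTop_of_infinite_support {a : ℕ → ℕ}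
    (ha : (Function.support a).Infinite) :
    Tendsto (fun n => ∑ i ∈ range n, a i) atTop atTop := by
  refine tendsto_atTop_atTop_of_monotone ((sum_mono_set a).comp range_mono) fun m => ?_
  obtain ⟨s, hs, rfl⟩ := ha.exists_subset_card_eq m
  obtain ⟨n, hn⟩ := s.exists_nat_subset_range
  refine ⟨n, ?_⟩
  calc #s = ∑ _i ∈ s, 1 := card_eq_sum_ones s
    _ ≤ ∑ i ∈ s, a i := sum_le_sum fun i hi => Nat.one_le_iff_ne_zero.2 (hs hi)
    _ ≤ ∑ i ∈ range n, a i := sum_le_sum_of_subset hn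

section BernoulliMeasure

variable {α : Type*} [MeasurableSpace α] {κ : α → Measure α}

theorem bernoulliMeasure_bind (hκ : Measurable κ) (a b : α) (p : I) :
    Ber(a, b, p).bind κ = toNNReal p • κ a + toNNReal (σ p) • κ b := by
  ext s hs
  have hκs : Measurable fun x => κ x s := (Measure.measurable_coe hs).comp hκ
  simp only [bernoulliMeasure_def, Measure.bind_apply hs hκ.aemeasurable, lintegral_add_measure,
    lintegral_smul_measure, lintegral_dirac' _ hκs, Measure.add_apply, Measure.smul_apply]

theorem bernoulliMeasure_bind_of_eq_dirac (hκ : Measurable κ) {a a' b : α} {q : I}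
    (ha : κ a = Ber(a', b, q)) (hb : κ b = Measure.dirac b) (p : I) :
    Ber(a, b, p).bind κ = Ber(a', b, p * q) := by
  have hmul : toNNReal (p * q) = toNNReal p * toNNReal q := rfl
  have hsymm : toNNReal (σ (p * q)) = toNNReal p * toNNReal (σ q) + toNNReal (σ p) := by
    ext
    simp only [coe_toNNReal, coe_symm_eq, NNReal.coe_add, NNReal.coe_mul, Set.Icc.coe_mul]
    ring
  rw [bernoulliMeasure_bind hκ, ha, hb, bernoulliMeasure_def, bernoulliMeasure_def, hmul, hsymm,
    smul_add, smul_smul, smul_smul, add_smul, add_assoc]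

end BernoulliMeasure

theorem circleRep_coe (t : ℝ) : circleRep (t : UnitAddCircle) = Int.fract t := by
  simpa only [div_one, mul_one] using! AddCircle.coe_equivIco_mk_apply (p := (1 : ℝ)) t

theorem coe_circleRep (x : UnitAddCircle) : ((circleRep x : ℝ) : UnitAddCircle) = x :=
  (AddCircle.equivIco (1 : ℝ) 0).symm_apply_apply x

theorem circleRep_nonneg (x : UnitAddCircle) : 0 ≤ circleRep x :=
  (AddCircle.equivIco (1 : ℝ) 0 x).2.1

theorem circleRep_zero : circleRep 0 = 0 := by
  simpa using circleRep_coe 0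

theorem circleRep_nsmul (m : ℕ) (x : UnitAddCircle) :
    circleRep (m • x) = Int.fract (circleRep x * m) := by
  rw [← circleRep_coe, mul_comm, ← nsmul_eq_mul, AddCircle.coe_nsmul, coe_circleRep]

theorem measurable_circleRep : Measurable circleRep :=
  measurable_subtype_coe.comp (AddCircle.measurableEquivIco (1 : ℝ) 0).measurable

theorem continuousAt_circleRep {x : UnitAddCircle} (hx : x ≠ 0) : ContinuousAt circleRep x :=
  continuousAt_subtype_val.comp (AddCircle.continuousAt_equivIco (1 : ℝ) 0 (by simpa using hx))

theorem binDigit_eq_ite {t : ℝ} (ht : 0 ≤ t) (k : ℕ) :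
    binDigit t k = if Int.fract (t * 2 ^ k) < 1 / 2 then 0 else 1 := by
  have hfloor : 0 ≤ ⌊t * 2 ^ k⌋ := Int.floor_nonneg.2 (by positivity)
  have hsplit := Int.floor_add_fract (t * 2 ^ k)
  have hfract := Int.fract_lt_one (t * 2 ^ k)
  rw [binDigit, pow_succ, ← mul_assoc]
  split_ifs with h
  · have hdouble : ⌊t * 2 ^ k * 2⌋ = 2 * ⌊t * 2 ^ k⌋ := by
      rw [Int.floor_eq_iff]
      push_cast
      constructor <;> linarith [Int.fract_nonneg (t * 2 ^ k)]
    lia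
  · have hdouble : ⌊t * 2 ^ k * 2⌋ = 2 * ⌊t * 2 ^ k⌋ + 1 := by
      rw [Int.floor_eq_iff]
      push_cast
      constructor <;> linarith
    lia

theorem binDigit_circleRep (x : UnitAddCircle) (k : ℕ) :
    binDigit (circleRep x) k = if circleRep (2 ^ k • x) < 1 / 2 then 0 else 1 := by
  rw [binDigit_eq_ite (circleRep_nonneg x), circleRep_nsmul, Nat.cast_pow, Nat.cast_ofNat]

theorem binDigit_circleRep_two_pow_nsmul (x : UnitAddCircle) (n k : ℕ) :
    binDigit (circleRep (2 ^ n • x)) k = binDigit (circleRep x) (n + k) := by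
  rw [binDigit_circleRep, binDigit_circleRep, smul_smul, ← pow_add, add_comm]

theorem two_pow_nsmul_ne_zero_of_infinite_binDigit_eq_one {z : UnitAddCircle}
    (hz : {i : ℕ | binDigit (circleRep z) i = 1}.Infinite) (k : ℕ) : 2 ^ k • z ≠ 0 := by
  intro hk
  obtain ⟨i, hi, hki⟩ := hz.exists_gt k
  obtain ⟨j, rfl⟩ := Nat.exists_eq_add_of_le hki.le
  rw [Set.mem_ofPred_eq, ← binDigit_circleRep_two_pow_nsmul, hk] at hi
  simp [binDigit, circleRep_zero] at hi

theorem circleRep_ne_half {y : UnitAddCircle} (hy : 2 • y ≠ 0) : circleRep y ≠ 1 / 2 := by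
  intro h
  apply hy
  rw [← coe_circleRep y, h, ← AddCircle.coe_nsmul]
  simp

theorem eventually_circleRep_lt_half_iff {y : UnitAddCircle} (hy : 2 • y ≠ 0) :
    ∀ᶠ x in 𝓝 y, (circleRep x < 1 / 2 ↔ circleRep y < 1 / 2) := by
  have hcont : ContinuousAt circleRep y := continuousAt_circleRep (by rintro rfl; simp at hy)
  rcases (circleRep_ne_half hy).lt_or_gt with h | h
  · filter_upwards [hcont.eventually_lt_const h] with x hx using iff_of_true hx h
  · filter_upwards [hcont.eventually_const_lt h] with x hx using iff_of_false hx.not_gt h.not_gt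

theorem eventually_binDigit_circleRep_eq {z : UnitAddCircle} {k : ℕ} (hz : 2 ^ (k + 1) • z ≠ 0) :
    ∀ᶠ x in 𝓝 z, binDigit (circleRep x) k = binDigit (circleRep z) k := by
  have hk : 2 • (2 ^ k • z) ≠ 0 := by rwa [smul_smul, ← pow_succ']
  filter_upwards [(continuous_nsmul (2 ^ k)).continuousAt.eventually
    (eventually_circleRep_lt_half_iff hk)] with x hx
  simp only [binDigit_circleRep, hx]

/-- The number of digits `1` among the first `n` binary digits of `x`. -/
noncomputable def binOnes (n : ℕ) (x : UnitAddCircle) : ℕ :=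
  ∑ k ∈ range n, binDigit (circleRep x) k

theorem monotone_binOnes (x : UnitAddCircle) : Monotone fun n => binOnes n x :=
  (sum_mono_set _).comp range_mono

theorem binOnes_add (m n : ℕ) (x : UnitAddCircle) :
    binOnes (m + n) x = binOnes m x + binOnes n (2 ^ m • x) := by
  simp only [binOnes, sum_range_add, binDigit_circleRep_two_pow_nsmul]

theorem eventually_binOnes_eq {z : UnitAddCircle} {n : ℕ} (hz : 2 ^ n • z ≠ 0) :
    ∀ᶠ x in 𝓝 z, binOnes n x = binOnes n z := by
  have hzero : ∀ k ∈ range n, 2 ^ (k + 1) • z ≠ 0 := fun k hk h => hz <| by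
    obtain ⟨d, hd⟩ := pow_dvd_pow 2 (Nat.succ_le_of_lt (mem_range.1 hk))
    rw [hd, mul_comm, ← smul_smul, h, smul_zero]
  filter_upwards [(eventually_all_finset (range n)).2 fun k hk =>
    eventually_binDigit_circleRep_eq (hzero k hk)] with x hx
  exact sum_congr rfl hx

theorem tendsto_binOnes_atTop_prod_nhds {z : UnitAddCircle}
    (hz : {i : ℕ | binDigit (circleRep z) i = 1}.Infinite) :
    Tendsto (fun p : ℕ × UnitAddCircle => binOnes p.1 p.2) (atTop ×ˢ 𝓝 z) atTop := by
  have hsupp : (Function.support (binDigit (circleRep z))).Infinite :=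
    hz.mono fun i (hi : binDigit (circleRep z) i = 1) => by simp [hi]
  refine tendsto_atTop.2 fun m => ?_
  obtain ⟨N, hN⟩ : ∃ N, m ≤ binOnes N z :=
    ((tendsto_sum_range_atTop_of_infinite_support hsupp).eventually_ge_atTop m).exists
  have hzero := two_pow_nsmul_ne_zero_of_infinite_binDigit_eq_one hz
  filter_upwards [(eventually_ge_atTop N).prod_mk (eventually_binOnes_eq (hzero N))] with p hp
  calc m ≤ binOnes N z := hN
    _ = binOnes N p.2 := hp.2.symm
    _ ≤ binOnes p.1 p.2 := monotone_binOnes p.2 hp.1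

/-- The probability that the first `n` steps of the chain started at `x` all follow the
doubling map: each digit `1` met on the way halves it. -/
noncomputable def doublingProb (n : ℕ) (x : UnitAddCircle) : I :=
  ⟨(1 / 2) ^ binOnes n x, by positivity, pow_le_one₀ (by norm_num) (by norm_num)⟩

theorem coe_doublingProb (n : ℕ) (x : UnitAddCircle) :
    (doublingProb n x : ℝ) = (1 / 2) ^ binOnes n x :=
  rfl

theorem doublingProb_add (m n : ℕ) (x : UnitAddCircle) :
    doublingProb (m + n) x = doublingProb m x * doublingProb n (2 ^ m • x) := by
  ext
  simp only [Set.Icc.coe_mul, coe_doublingProb, binOnes_add, pow_add]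

theorem measurable_circleKer : Measurable circleKer := by
  have hdouble : Measurable fun y : UnitAddCircle => Measure.dirac (y + y) :=
    Measure.measurable_dirac.comp (by fun_prop)
  refine Measurable.ite (measurableSet_lt measurable_circleRep measurable_const) hdouble ?_
  refine Measure.measurable_of_measurable_coe _ fun s hs => ?_
  simp only [Measure.add_apply, Measure.smul_apply, smul_eq_mul]
  exact (((Measure.measurable_coe hs).comp hdouble).const_mul _).const_add _

theorem circleKer_eq_bernoulliMeasure (y : UnitAddCircle) :
    circleKer y = Ber(2 • y, 0, doublingProb 1 y) := by
  have hones : binOnes 1 y = if circleRep y < 1 / 2 then 0 else 1 := by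
    rw [binOnes, sum_range_one, binDigit_circleRep, pow_zero, one_smul]
  rw [circleKer, two_nsmul]
  split_ifs at hones ⊢
  · have hp : doublingProb 1 y = 1 := by
      ext
      rw [coe_doublingProb, hones, pow_zero, Set.Icc.coe_one]
    rw [hp, bernoulliMeasure_one]
  · have hp : (doublingProb 1 y : ℝ) = 1 / 2 := by
      rw [coe_doublingProb, hones, pow_one]
    have hstay : toNNReal (doublingProb 1 y) = 1 / 2 := by
      ext
      rw [coe_toNNReal, hp]
      norm_num
    have hleave : toNNReal (σ (doublingProb 1 y)) = 1 / 2 := by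
      ext
      rw [coe_toNNReal, coe_symm_eq, hp]
      norm_num
    have hhalf : (1 / 2 : ENNReal) = ((1 / 2 : NNReal) : ENNReal) := by simp
    rw [bernoulliMeasure_def, hstay, hleave, add_comm, hhalf]
    rfl

theorem circleKer_zero : circleKer 0 = Measure.dirac 0 := by
  simp [circleKer, circleRep_zero]

theorem circleP_dirac (n : ℕ) (x : UnitAddCircle) :
    circleP n (Measure.dirac x) = Ber(2 ^ n • x, 0, doublingProb n x) := by
  induction n with
  | zero => simp [circleP, doublingProb, binOnes]
  | succ n ih =>
    rw [circleP, ih, bernoulliMeasure_bind_of_eq_dirac measurable_circleKer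
      (circleKer_eq_bernoulliMeasure _) circleKer_zero, smul_smul, ← pow_succ', doublingProb_add]

theorem circleU_eq (n : ℕ) (f : UnitAddCircle → ℝ) (x : UnitAddCircle) :
    circleU n f x = f 0 + (1 / 2) ^ binOnes n x * (f (2 ^ n • x) - f 0) := by
  rw [circleU, circleP_dirac, integral_bernoulliMeasure, coe_doublingProb, smul_eq_mul, smul_eq_mul]
  ring

theorem tendsto_circleU_atTop_prod_nhds {f : UnitAddCircle → ℝ} (hf : ∃ C : ℝ, ∀ x, |f x| ≤ C)
    {z : UnitAddCircle} (hz : {i : ℕ | binDigit (circleRep z) i = 1}.Infinite) :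
    Tendsto (fun p : ℕ × UnitAddCircle => circleU p.1 f p.2) (atTop ×ˢ 𝓝 z) (𝓝 (f 0)) := by
  obtain ⟨C, hC⟩ := hf
  have hweight : Tendsto (fun p : ℕ × UnitAddCircle => (1 / 2 : ℝ) ^ binOnes p.1 p.2)
      (atTop ×ˢ 𝓝 z) (𝓝 0) :=
    (tendsto_pow_atTop_nhds_zero_of_lt_one (by norm_num) (by norm_num)).comp
      (tendsto_binOnes_atTop_prod_nhds hz)
  have hbdd (p : ℕ × UnitAddCircle) : |f (2 ^ p.1 • p.2) - f 0| ≤ C + C :=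
    (abs_sub _ _).trans (add_le_add (hC _) (hC _))
  have hprod := hweight.zero_mul_isBoundedUnder_le (isBoundedUnder_of ⟨C + C, hbdd⟩)
  simpa only [circleU_eq, add_zero] using hprod.const_add (f 0)

theorem continuousAt_circleU {f : UnitAddCircle → ℝ} {z : UnitAddCircle} {n : ℕ}
    (hz : 2 ^ n • z ≠ 0) (hf : ContinuousAt f (2 ^ n • z)) :
    ContinuousAt (circleU n f) z := by
  have hweight : ContinuousAt (fun x => (1 / 2 : ℝ) ^ binOnes n x) z :=
    tendsto_nhds_of_eventually_eq <| (eventually_binOnes_eq hz).mono fun x hx => by rw [hx]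
  have horbit : ContinuousAt (fun x => f (2 ^ n • x)) z :=
    ContinuousAt.comp hf (continuous_nsmul (2 ^ n)).continuousAt
  rw [funext (circleU_eq n f)]
  exact continuousAt_const.add (hweight.mul (horbit.sub continuousAt_const))

theorem circle_eProp_at_nondyadic_general
    (z : UnitAddCircle) (hz : {i : ℕ | binDigit (circleRep z) i = 1}.Infinite)
    (f : UnitAddCircle → ℝ) (hf : ∀ n : ℕ, ContinuousAt f (2 ^ n • z))
    (hbdd : ∃ C : ℝ, ∀ x, |f x| ≤ C) :
    EquicontinuousAt (fun n => circleU n f) z := by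
  have hzero := two_pow_nsmul_ne_zero_of_infinite_binDigit_eq_one hz
  refine equicontinuousAt_of_tendsto_cofinite_prod_nhds (c := f 0)
    (fun n => continuousAt_circleU (hzero n) (hf n)) ?_
  rw [Nat.cofinite_eq_atTop]
  exact tendsto_circleU_atTop_prod_nhds hbdd hz

/-- The Markov operator on the circle generated by `π(y,·) = δ_{2y}` for `y ∈ [0,1/2)`,
`π(y,·) = (1/2)δ₀ + (1/2)δ_{2y−1}` for `y ∈ [1/2,1)`, has the e-property in `C_b(S)` at
every point `z` whose binary expansion contains infinitely many digits equal to `1`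
(i.e. at every point which is not a dyadic rational). -/
theorem circle_eProp_at_nondyadic
    (z : UnitAddCircle) (hz : {i : ℕ | binDigit (circleRep z) i = 1}.Infinite) :
    ∀ f : UnitAddCircle → ℝ, Continuous f → (∃ C : ℝ, ∀ x, |f x| ≤ C) →
      Tendsto (fun x => ⨆ n : ℕ, |circleU n f x - circleU n f z|) (𝓝 z) (𝓝 0) := by
  intro f hf hbdd
  simpa only [Real.dist_eq] using tendsto_iSup_dist_of_equicontinuousAt
    (circle_eProp_at_nondyadic_general z hz f (fun _ => hf.continuousAt) hbdd)
end

section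
/- Let S = [−2,−1] ∪ [0,1] ⊆ ℝ with the Euclidean metric. There exists a Markov-Feller operator P on S which is asymptotically stable (with invariant measure δ_0) and such that the set of points of S at which P does not have the e-property in C_b(S) has Lebesgue measure at least 1/2; in particular, this set is uncountable. -/
open MeasureTheory ProbabilityTheory Filter Topology

/-- The `n`-step evolution of a measure under the Markov operator generated by the
transition kernel `κ`: `P⁰μ = μ`, `Pⁿ⁺¹μ = (Pⁿμ).bind κ`. -/
noncomputable def kIter {S : Type*} [MeasurableSpace S] (κ : ProbabilityTheory.Kernel S S) :
    ℕ → Measure S → Measure S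
  | 0, μ => μ
  | n + 1, μ => (kIter κ n μ).bind (fun x => κ x)

/-- The `n`-th iterate of the dual operator: `Uⁿf(x) = ∫ f d(Pⁿδₓ)`. -/
noncomputable def kDual {S : Type*} [MeasurableSpace S] (κ : ProbabilityTheory.Kernel S S)
    (n : ℕ) (f : S → ℝ) (x : S) : ℝ :=
  ∫ y, f y ∂(kIter κ n (Measure.dirac x))

/-- A real-valued function is bounded. -/
def IsBddFun {S : Type*} (f : S → ℝ) : Prop := ∃ C : ℝ, ∀ x, |f x| ≤ C

/-- The Feller property: the dual operator maps bounded continuous functions to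
continuous functions. -/
def IsFeller {S : Type*} [MeasurableSpace S] [TopologicalSpace S]
    (κ : ProbabilityTheory.Kernel S S) : Prop :=
  ∀ f : S → ℝ, Continuous f → IsBddFun f → Continuous (fun x => ∫ y, f y ∂(κ x))

/-- Asymptotic stability: `μst` is an invariant probability measure and `Pⁿμ → μst`
weakly for every Borel probability measure `μ`. -/
def IsAsympStable {S : Type*} [MeasurableSpace S] [TopologicalSpace S]
    (κ : ProbabilityTheory.Kernel S S) (μst : Measure S) : Prop :=
  IsProbabilityMeasure μst ∧ kIter κ 1 μst = μst ∧
    ∀ μ : Measure S, IsProbabilityMeasure μ → ∀ f : S → ℝ, Continuous f → IsBddFun f →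
      Tendsto (fun n => ∫ x, f x ∂(kIter κ n μ)) atTop (𝓝 (∫ x, f x ∂μst))

/-- The e-property in `C_b(S)` at a point `z`: for every bounded continuous `f`,
`sup_{n} |Uⁿf(x) − Uⁿf(z)| → 0` as `x → z`. -/
def EPropCbAt {S : Type*} [MeasurableSpace S] [TopologicalSpace S]
    (κ : ProbabilityTheory.Kernel S S) (z : S) : Prop :=
  ∀ f : S → ℝ, Continuous f → IsBddFun f →
    Tendsto (fun x => ⨆ n : ℕ, |kDual κ n f x - kDual κ n f z|) (𝓝 z) (𝓝 0)


/-- The state space `S = [−2,−1] ∪ [0,1]`, as a metric subspace of `ℝ`. -/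
def SVCSpace : Set ℝ := Set.Icc (-2) (-1) ∪ Set.Icc 0 1

/-! Between resets to the absorbing state `0`, the chain on `[0, 1]` doubles, truncated at `1`;
resets occur with probability `(2x - 1)⁺`, so that every positive starting point eventually
reaches `1` and is reset, while the chain started from a small `x > 0` almost surely passes
through `[1/2, 1]` before its first reset, however small `x` is. A point `x ∈ [-2, -1]` is first
sent to `[0, 1]` by a continuous map vanishing exactly on a closed set `F`. Near a point of `F`
which is a limit of points outside `F`, the orbit thus either sits at `0` or makes an excursion to
`[1/2, 1]`, which destroys the e-property there. A closed set with dense complement, such as the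
complement of a small open neighbourhood of `ℚ`, consists of such points and can nearly fill
`[-2, -1]`. -/

section MarkovKernel

variable {S : Type*} [MeasurableSpace S] {κ : Kernel S S} {f : S → ℝ}

lemma kIter_eq_pow_comp (κ : Kernel S S) (n : ℕ) (μ : Measure S) :
    kIter κ n μ = (κ ^ n) ∘ₘ μ := by
  induction n with
  | zero => exact Measure.id_comp.symm
  | succ n ih => rw [kIter, ih, Measure.comp_assoc, pow_succ']; rfl

lemma kDual_eq_integral_pow (n : ℕ) (f : S → ℝ) (x : S) :
    kDual κ n f x = ∫ y, f y ∂(κ ^ n) x := by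
  rw [kDual, kIter_eq_pow_comp, Measure.dirac_bind (κ ^ n).measurable]

lemma stronglyMeasurable_kDual (hf : StronglyMeasurable f) (n : ℕ) :
    StronglyMeasurable (kDual κ n f) := by
  simp only [funext (kDual_eq_integral_pow (κ := κ) n f)]
  exact hf.integral_kernel

lemma kDual_zero (hf : StronglyMeasurable f) (x : S) : kDual κ 0 f x = f x :=
  integral_dirac' f x hf

variable [IsMarkovKernel κ]

lemma isMarkovKernel_pow (n : ℕ) : IsMarkovKernel (κ ^ n) := by
  induction n with
  | zero => exact inferInstanceAs (IsMarkovKernel Kernel.id)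
  | succ n ih => rw [pow_succ]; exact inferInstanceAs (IsMarkovKernel ((κ ^ n) ∘ₖ κ))

lemma abs_kDual_le {C : ℝ} (hC : ∀ x, |f x| ≤ C) (n : ℕ) (x : S) : |kDual κ n f x| ≤ C := by
  have := isMarkovKernel_pow (κ := κ) n
  rw [kDual_eq_integral_pow]
  simpa using norm_integral_le_of_norm_le_const (μ := (κ ^ n) x) (f := f) (.of_forall hC)

lemma IsBddFun.integrable {μ : Measure S} [IsFiniteMeasure μ] (hb : IsBddFun f)
    (hf : StronglyMeasurable f) : Integrable f μ :=
  let ⟨C, hC⟩ := hb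
  .of_bound hf.aestronglyMeasurable C (.of_forall hC)

lemma integral_kIter (μ : Measure S) [IsFiniteMeasure μ] (hf : StronglyMeasurable f)
    (hb : IsBddFun f) (n : ℕ) : ∫ x, f x ∂(kIter κ n μ) = ∫ x, kDual κ n f x ∂μ := by
  have := isMarkovKernel_pow (κ := κ) n
  simp only [kDual_eq_integral_pow]
  rw [kIter_eq_pow_comp, Measure.comp_eq_comp_const_apply,
    Kernel.integral_comp (hb.integrable hf), Kernel.const_apply]

lemma kDual_succ (hf : StronglyMeasurable f) (hb : IsBddFun f) (n : ℕ) (x : S) :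
    kDual κ (n + 1) f x = ∫ y, kDual κ n f y ∂κ x := by
  have := isMarkovKernel_pow (κ := κ) n
  simp only [kDual_eq_integral_pow]
  rw [pow_succ]
  exact Kernel.integral_comp (hb.integrable hf)

variable [TopologicalSpace S]

theorem isAsympStable_of_tendsto_kDual [OpensMeasurableSpace S] {μst : Measure S}
    [IsProbabilityMeasure μst] (hinv : κ.Invariant μst)
    (h : ∀ f : S → ℝ, Continuous f → IsBddFun f → ∀ x,
      Tendsto (fun n => kDual κ n f x) atTop (𝓝 (∫ y, f y ∂μst))) :
    IsAsympStable κ μst := by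
  refine ⟨inferInstance, hinv, fun μ _ f hf hb => ?_⟩
  have hfm := hf.stronglyMeasurable
  obtain ⟨C, hC⟩ := hb
  simp only [integral_kIter μ hfm ⟨C, hC⟩]
  simpa using tendsto_integral_of_dominated_convergence (μ := μ) (fun _ => C)
    (fun n => (stronglyMeasurable_kDual hfm n).aestronglyMeasurable) (integrable_const C)
    (fun n => .of_forall (abs_kDual_le hC n)) (.of_forall (h f hf ⟨C, hC⟩))

theorem not_ePropCbAt_of_frequently {z : S} {δ : ℝ} (hδ : 0 < δ) (hf : Continuous f)
    (hb : IsBddFun f) (h : ∃ᶠ x in 𝓝 z, ∃ n, δ ≤ |kDual κ n f x - kDual κ n f z|) :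
    ¬ EPropCbAt κ z := by
  intro hE
  obtain ⟨x, ⟨n, hn⟩, hx⟩ :=
    (h.and_eventually ((hE f hf hb).eventually (gt_mem_nhds hδ))).exists
  obtain ⟨C, hC⟩ := hb
  have hbdd : BddAbove (Set.range fun n => |kDual κ n f x - kDual κ n f z|) := by
    refine ⟨C + C, ?_⟩
    rintro _ ⟨m, rfl⟩
    exact (abs_sub _ _).trans (add_le_add (abs_kDual_le hC m x) (abs_kDual_le hC m z))
  exact (hn.trans (le_ciSup hbdd n)).not_gt hx

end MarkovKernel

open unitInterval in
/-- The transition kernel of the chain which, from a state `x`, is reset to `o` with probability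
`p x` and moves to `T x` otherwise. -/
noncomputable def resetKernel {S : Type*} [TopologicalSpace S] [MeasurableSpace S] [BorelSpace S]
    (p : C(S, unitInterval)) (T : C(S, S)) (o : S) : Kernel S S where
  toFun x := toNNReal (symm (p x)) • Measure.dirac (T x) +
    toNNReal (p x) • Measure.dirac o
  measurable' := by
    refine Measure.measurable_of_measurable_coe _ fun s hs => ?_
    have hT : Measurable fun x => Measure.dirac (T x) s :=
      (Measure.measurable_coe hs).comp (Measure.measurable_dirac.comp T.continuous.measurable)
    have hp : Measurable fun x => toNNReal (p x) :=
      Continuous.measurable (by fun_prop)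
    have hp' : Measurable fun x => toNNReal (symm (p x)) :=
      Continuous.measurable (by fun_prop)
    simp only [Measure.add_apply, Measure.smul_apply, ENNReal.smul_def, smul_eq_mul]
    fun_prop

section ResetKernel

variable {S : Type*} [TopologicalSpace S] [MeasurableSpace S] [BorelSpace S]
  {p : C(S, unitInterval)} {T : C(S, S)} {o : S} {f : S → ℝ}

open unitInterval in
lemma resetKernel_apply (x : S) :
    resetKernel p T o x = toNNReal (symm (p x)) • Measure.dirac (T x) +
      toNNReal (p x) • Measure.dirac o :=
  rfl

instance : IsMarkovKernel (resetKernel p T o) where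
  isProbabilityMeasure x := by
    constructor
    simp only [resetKernel_apply, Measure.add_apply, Measure.smul_apply, measure_univ,
      ENNReal.smul_def, smul_eq_mul, mul_one]
    exact_mod_cast unitInterval.toNNReal_symm_add_toNNReal (p x)

lemma integral_resetKernel (hf : StronglyMeasurable f) (x : S) :
    ∫ y, f y ∂resetKernel p T o x = (1 - p x) * f (T x) + p x * f o := by
  have hi (y : S) : Integrable f (Measure.dirac y) := integrable_dirac' hf (by simp)
  rw [resetKernel_apply, integral_add_measure ((hi _).smul_measure_nnreal)
    ((hi _).smul_measure_nnreal), integral_smul_nnreal_measure, integral_smul_nnreal_measure,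
    integral_dirac' _ _ hf, integral_dirac' _ _ hf]
  rfl

lemma isFeller_resetKernel : IsFeller (resetKernel p T o) := by
  intro f hf _
  simp only [integral_resetKernel hf.stronglyMeasurable]
  fun_prop

lemma invariant_dirac_resetKernel (ho : T o = o) :
    (resetKernel p T o).Invariant (Measure.dirac o) := by
  rw [Kernel.Invariant, Measure.dirac_bind (resetKernel p T o).measurable, resetKernel_apply, ho,
    ← add_smul, unitInterval.toNNReal_symm_add_toNNReal, one_smul]

lemma kDual_resetKernel_succ (hf : StronglyMeasurable f) (hb : IsBddFun f) (n : ℕ) (x : S) :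
    kDual (resetKernel p T o) (n + 1) f x =
      (1 - p x) * kDual (resetKernel p T o) n f (T x) + p x * kDual (resetKernel p T o) n f o := by
  rw [kDual_succ hf hb, integral_resetKernel (stronglyMeasurable_kDual hf n)]

lemma kDual_resetKernel_of_forall_lt_eq_zero (hf : StronglyMeasurable f) (hb : IsBddFun f) {n : ℕ}
    {x : S} (hp : ∀ i < n, p (T^[i] x) = 0) :
    kDual (resetKernel p T o) n f x = f (T^[n] x) := by
  induction n generalizing x with
  | zero => exact kDual_zero hf x
  | succ n ih =>
    have hx : p x = 0 := hp 0 n.succ_pos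
    rw [kDual_resetKernel_succ hf hb, ih fun i hi => hp (i + 1) (by lia), hx,
      Function.iterate_succ_apply]
    simp

lemma kDual_resetKernel (ho : T o = o) (hf : StronglyMeasurable f) (hb : IsBddFun f) (n : ℕ)
    (x : S) :
    kDual (resetKernel p T o) n f x =
      f o + (∏ i ∈ Finset.range n, (1 - (p (T^[i] x) : ℝ))) * (f (T^[n] x) - f o) := by
  induction n generalizing x with
  | zero => simp [kDual_zero hf]
  | succ n ih =>
    rw [kDual_resetKernel_succ hf hb, ih (T x), ih o, Function.iterate_fixed ho,
      Finset.prod_range_succ']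
    simp only [Function.iterate_succ_apply, Function.iterate_zero_apply]
    ring

lemma eventually_kDual_resetKernel_eq (ho : T o = o) (hf : StronglyMeasurable f) (hb : IsBddFun f)
    {x : S} {m : ℕ} (hm : T^[m] x = o ∨ p (T^[m] x) = 1) :
    ∀ᶠ n in atTop, kDual (resetKernel p T o) n f x = f o := by
  filter_upwards [eventually_gt_atTop m] with n hn
  rw [kDual_resetKernel ho hf hb]
  rcases hm with hm | hm
  · have : T^[n] x = o := by
      rw [← Nat.sub_add_cancel hn.le, Function.iterate_add_apply, hm, Function.iterate_fixed ho]
    rw [this, sub_self, mul_zero, add_zero]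
  · rw [Finset.prod_eq_zero (Finset.mem_range.2 hn) (by simp [hm]), zero_mul, add_zero]

theorem isAsympStable_resetKernel (ho : T o = o)
    (h : ∀ x, ∃ m, T^[m] x = o ∨ p (T^[m] x) = 1) :
    IsAsympStable (resetKernel p T o) (Measure.dirac o) := by
  refine isAsympStable_of_tendsto_kDual (invariant_dirac_resetKernel ho) fun f hf hb x => ?_
  have hfm := hf.stronglyMeasurable
  obtain ⟨m, hm⟩ := h x
  rw [integral_dirac' f o hfm]
  exact tendsto_nhds_of_eventually_eq (eventually_kDual_resetKernel_eq ho hfm hb hm)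

end ResetKernel

namespace SVCSpace

/-- The point `0` of the state space, to which the chain is reset. -/
def origin : SVCSpace := ⟨0, Or.inr ⟨le_rfl, zero_le_one⟩⟩

@[simp] lemma coe_origin : (origin : ℝ) = 0 := rfl

/-- The reset probability `x ↦ (2x - 1)⁺`, written as a projection onto `[0, 1]`. -/
noncomputable def resetProb : C(SVCSpace, unitInterval) where
  toFun x := Set.projIcc 0 1 zero_le_one (2 * (x : ℝ) - 1)
  continuous_toFun := by fun_prop

/-- The motion between resets: doubling on `[0, 1]`, and a multiple of the distance to `F` on
`[-2, -1]`, both truncated at `1`. -/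
noncomputable def gatedDoubling (F : Set ℝ) : C(SVCSpace, SVCSpace) where
  toFun x := ⟨Set.projIcc (0 : ℝ) 1 zero_le_one
    (2 * max (x : ℝ) 0 + max (-x : ℝ) 0 * Metric.infDist (x : ℝ) F), Or.inr (Subtype.prop _)⟩
  continuous_toFun := by
    have := Metric.continuous_infDist_pt F
    fun_prop

/-- The Markov chain on `SVCSpace` driven by `gatedDoubling F` and reset to `0`. -/
noncomputable abbrev chain (F : Set ℝ) : Kernel SVCSpace SVCSpace :=
  resetKernel resetProb (gatedDoubling F) origin

variable {F : Set ℝ} {x z : SVCSpace}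

lemma coe_le_one (x : SVCSpace) : (x : ℝ) ≤ 1 :=
  x.2.elim (fun h => h.2.trans (by norm_num)) (fun h => h.2)

lemma resetProb_eq_zero (hx : (x : ℝ) ≤ 1 / 2) : resetProb x = 0 :=
  Set.projIcc_of_le_left zero_le_one (by linarith)

lemma resetProb_eq_one (hx : 1 ≤ (x : ℝ)) : resetProb x = 1 :=
  Set.projIcc_of_right_le zero_le_one (by linarith)

lemma gatedDoubling_nonneg (x : SVCSpace) : 0 ≤ (gatedDoubling F x : ℝ) :=
  (Set.projIcc (0 : ℝ) 1 zero_le_one _).2.1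

lemma coe_gatedDoubling_of_nonneg (hx : 0 ≤ (x : ℝ)) :
    (gatedDoubling F x : ℝ) = min 1 (2 * (x : ℝ)) := by
  simp [gatedDoubling, Set.coe_projIcc, hx]

lemma coe_gatedDoubling_of_neg (hx : (x : ℝ) < 0) :
    (gatedDoubling F x : ℝ) = min 1 (-x * Metric.infDist (x : ℝ) F) := by
  have : (x : ℝ) * Metric.infDist (x : ℝ) F ≤ 0 :=
    mul_nonpos_of_nonpos_of_nonneg hx.le Metric.infDist_nonneg
  simp [gatedDoubling, Set.coe_projIcc, hx.le, this]

lemma gatedDoubling_origin : gatedDoubling F origin = origin := by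
  ext
  simp [coe_gatedDoubling_of_nonneg coe_origin.ge]

lemma gatedDoubling_eq_origin (hx : (x : ℝ) < 0) (hxF : (x : ℝ) ∈ F) :
    gatedDoubling F x = origin := by
  ext
  simp [coe_gatedDoubling_of_neg hx, Metric.infDist_zero_of_mem hxF]

lemma gatedDoubling_pos (hF : IsClosed F) (hne : F.Nonempty) (hx : (x : ℝ) < 0)
    (hxF : (x : ℝ) ∉ F) : 0 < (gatedDoubling F x : ℝ) := by
  rw [coe_gatedDoubling_of_neg hx]
  exact lt_min one_pos (mul_pos (neg_pos.2 hx) ((hF.notMem_iff_infDist_pos hne).1 hxF))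

lemma coe_iterate_gatedDoubling (hx : 0 ≤ (x : ℝ)) (n : ℕ) :
    ((gatedDoubling F)^[n] x : ℝ) = min 1 (2 ^ n * (x : ℝ)) := by
  induction n with
  | zero => simp [coe_le_one x]
  | succ n ih =>
    have hn : 0 ≤ ((gatedDoubling F)^[n] x : ℝ) := by rw [ih]; positivity
    rw [Function.iterate_succ_apply', coe_gatedDoubling_of_nonneg hn, ih,
      mul_min_of_nonneg _ _ zero_le_two, ← min_assoc, min_eq_left (by norm_num : (1 : ℝ) ≤ 2 * 1),
      pow_succ', mul_assoc]

lemma exists_iterate_gatedDoubling_of_nonneg (hx : 0 ≤ (x : ℝ)) :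
    ∃ m, (gatedDoubling F)^[m] x = origin ∨ resetProb ((gatedDoubling F)^[m] x) = 1 := by
  rcases hx.eq_or_lt with h0 | hpos
  · exact ⟨0, Or.inl (Subtype.ext h0.symm)⟩
  · obtain ⟨m, hm⟩ := pow_unbounded_of_one_lt (1 / (x : ℝ)) one_lt_two
    refine ⟨m, Or.inr (resetProb_eq_one ?_)⟩
    rw [coe_iterate_gatedDoubling hx]
    exact le_min le_rfl ((div_lt_iff₀ hpos).1 hm).le

theorem isAsympStable_chain (F : Set ℝ) : IsAsympStable (chain F) (Measure.dirac origin) :=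
  isAsympStable_resetKernel gatedDoubling_origin fun x =>
    let ⟨m, hm⟩ := exists_iterate_gatedDoubling_of_nonneg (F := F) (gatedDoubling_nonneg x)
    ⟨m + 1, hm⟩

/-- The test function `x ↦ x⁺` witnessing the failure of the e-property. -/
def coePosPart (x : SVCSpace) : ℝ := max x 0

lemma continuous_coePosPart : Continuous coePosPart := by
  unfold coePosPart
  fun_prop

lemma isBddFun_coePosPart : IsBddFun coePosPart :=
  ⟨1, fun x => by
    rw [coePosPart, abs_of_nonneg (le_max_right _ _)]
    exact max_le (coe_le_one x) zero_le_one⟩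

lemma kDual_chain_coePosPart_of_forall_lt {n : ℕ}
    (h : ∀ i < n, ((gatedDoubling F)^[i] x : ℝ) ≤ 1 / 2) :
    kDual (chain F) n coePosPart x = coePosPart ((gatedDoubling F)^[n] x) :=
  kDual_resetKernel_of_forall_lt_eq_zero continuous_coePosPart.stronglyMeasurable
    isBddFun_coePosPart fun i hi => resetProb_eq_zero (h i hi)

lemma exists_half_le_kDual_chain_coePosPart (hx : 0 < (x : ℝ)) :
    ∃ n, 1 / 2 ≤ kDual (chain F) n coePosPart x := by
  obtain ⟨n, hlt, hle⟩ := exists_nat_pow_near_of_lt_one hx (coe_le_one x) one_half_pos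
    (one_half_lt_one (α := ℝ))
  refine ⟨n, ?_⟩
  have hlow (i : ℕ) (hi : i < n) : 2 ^ i * (x : ℝ) ≤ 1 / 2 := by
    calc 2 ^ i * (x : ℝ) ≤ 2 ^ i * (1 / 2) ^ n := by gcongr
      _ ≤ 2 ^ i * (1 / 2) ^ (i + 1) := by
        gcongr 2 ^ i * ?_
        exact pow_le_pow_of_le_one one_half_pos.le one_half_lt_one.le hi
      _ = 1 / 2 := by rw [pow_succ, ← mul_assoc, ← mul_pow]; norm_num
  have hhigh : 1 / 2 ≤ 2 ^ n * (x : ℝ) := by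
    calc (1 / 2 : ℝ) = 2 ^ n * (1 / 2) ^ (n + 1) := by
          rw [pow_succ, ← mul_assoc, ← mul_pow]; norm_num
      _ ≤ 2 ^ n * x := by gcongr
  have hcoe := coe_iterate_gatedDoubling (F := F) hx.le
  rw [kDual_chain_coePosPart_of_forall_lt fun i hi =>
    (hcoe i).trans_le ((min_le_right _ _).trans (hlow i hi)), coePosPart, hcoe]
  exact le_max_of_le_left (le_min one_half_lt_one.le hhigh)

lemma kDual_chain_coePosPart_eq_zero (hz : (z : ℝ) < 0) (hzF : (z : ℝ) ∈ F) (n : ℕ) :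
    kDual (chain F) n coePosPart z = 0 := by
  have hnonpos (i : ℕ) : ((gatedDoubling F)^[i] z : ℝ) ≤ 0 := by
    cases i with
    | zero => exact hz.le
    | succ i =>
      rw [Function.iterate_succ_apply, gatedDoubling_eq_origin hz hzF,
        Function.iterate_fixed gatedDoubling_origin, coe_origin]
  rw [kDual_chain_coePosPart_of_forall_lt fun i _ => (hnonpos i).trans one_half_pos.le, coePosPart,
    max_eq_right (hnonpos n)]

theorem not_ePropCbAt_chain (hF : IsClosed F) (hz : (z : ℝ) < 0) (hzF : (z : ℝ) ∈ F)
    (hfreq : ∃ᶠ x : SVCSpace in 𝓝 z, (x : ℝ) ∉ F) : ¬ EPropCbAt (chain F) z := by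
  refine not_ePropCbAt_of_frequently one_half_pos continuous_coePosPart isBddFun_coePosPart ?_
  have hneg : ∀ᶠ x : SVCSpace in 𝓝 z, (x : ℝ) < 0 :=
    continuous_subtype_val.continuousAt.eventually (gt_mem_nhds hz)
  refine (hfreq.and_eventually hneg).mono fun x ⟨hxF, hx⟩ => ?_
  obtain ⟨n, hn⟩ := exists_half_le_kDual_chain_coePosPart (gatedDoubling_pos hF ⟨z, hzF⟩ hx hxF)
  have hstep : kDual (chain F) (n + 1) coePosPart x =
      kDual (chain F) n coePosPart (gatedDoubling F x) := by
    rw [kDual_resetKernel_succ continuous_coePosPart.stronglyMeasurable isBddFun_coePosPart,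
      resetProb_eq_zero (hx.le.trans one_half_pos.le)]
    simp
  refine ⟨n + 1, ?_⟩
  rw [kDual_chain_coePosPart_eq_zero hz hzF, sub_zero, hstep]
  exact hn.trans (le_abs_self _)

theorem not_ePropCbAt_chain_of_mem_Ioo (hF : IsClosed F) (hd : Dense Fᶜ)
    (hz : (z : ℝ) ∈ Set.Ioo (-2) (-1)) (hzF : (z : ℝ) ∈ F) : ¬ EPropCbAt (chain F) z := by
  refine not_ePropCbAt_chain hF (hz.2.trans (by norm_num)) hzF ?_
  have hnhds : ∀ᶠ y in 𝓝 (z : ℝ), y ∈ SVCSpace :=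
    mem_of_superset (Ioo_mem_nhds hz.1 hz.2) (Set.Ioo_subset_Icc_self.trans Set.subset_union_left)
  have hfreq := mem_closure_iff_frequently.1 (hd (z : ℝ))
  rwa [← map_nhds_subtype_coe_eq_nhds z.2 hnhds, frequently_map] at hfreq

end SVCSpace

theorem exists_isClosed_dense_compl_lt_measure_inter {X : Type*} [TopologicalSpace X]
    [TopologicalSpace.SeparableSpace X] [MeasurableSpace X] (μ : Measure X) [μ.OuterRegular]
    [NullSingletonClass μ] {A : Set X} {c : ENNReal} (hc : c < μ A) :
    ∃ F : Set X, IsClosed F ∧ Dense Fᶜ ∧ c < μ (A ∩ F) := by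
  obtain ⟨D, hD, hDd⟩ := TopologicalSpace.exists_countable_dense X
  obtain ⟨ε, hε, hcε⟩ := ENNReal.lt_iff_exists_add_pos_lt.1 hc
  obtain ⟨U, hDU, hU, hμU⟩ := D.exists_isOpen_lt_of_lt (μ := μ) (ε : ENNReal)
    (by simpa [hD.measure_zero μ] using hε)
  refine ⟨Uᶜ, hU.isClosed_compl, by simpa using hDd.mono hDU, ?_⟩
  by_contra! hle
  refine hcε.not_ge ?_
  calc μ A ≤ μ (A ∩ Uᶜ) + μ (A \ Uᶜ) := measure_le_inter_add_sdiff μ A Uᶜ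
    _ ≤ c + μ U := by gcongr; rw [Set.sdiff_compl]; exact Set.inter_subset_right
    _ ≤ c + ε := by gcongr

open SVCSpace in
theorem exists_asympStable_feller_not_eProp_on_set_of_positive_measure_general {c : ENNReal}
    (hc : c < 1) :
    ∃ κ : ProbabilityTheory.Kernel SVCSpace SVCSpace, IsMarkovKernel κ ∧ IsFeller κ ∧
      (∃ h0 : (0 : ℝ) ∈ SVCSpace,
        IsAsympStable κ (Measure.dirac (⟨0, h0⟩ : SVCSpace))) ∧
      c < volume (Subtype.val '' {z : SVCSpace | ¬ EPropCbAt κ z}) ∧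
      ¬ ({z : SVCSpace | ¬ EPropCbAt κ z}).Countable := by
  obtain ⟨F, hF, hd, hvol⟩ := exists_isClosed_dense_compl_lt_measure_inter volume
    (A := Set.Ioo (-2 : ℝ) (-1)) (c := c) (hc.trans_eq (by norm_num [Real.volume_Ioo]))
  have hsub : Set.Ioo (-2) (-1) ∩ F ⊆ Subtype.val '' {z : SVCSpace | ¬ EPropCbAt (chain F) z} :=
    fun z ⟨hz, hzF⟩ => ⟨⟨z, Or.inl (Set.Ioo_subset_Icc_self hz)⟩,
      not_ePropCbAt_chain_of_mem_Ioo hF hd hz hzF, rfl⟩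
  have hlt := hvol.trans_le (measure_mono hsub)
  exact ⟨chain F, inferInstance, isFeller_resetKernel, ⟨origin.2, isAsympStable_chain F⟩, hlt,
    fun hcount => hlt.not_ge (((hcount.image _).measure_zero volume).trans_le zero_le)⟩

/-- On `S = [−2,−1] ∪ [0,1]` there exists an asymptotically stable Markov–Feller operator,
with invariant measure `δ₀`, such that the set of points at which the e-property in `C_b(S)`
fails has Lebesgue measure at least `1/2`; in particular this set is uncountable. -/
theorem exists_asympStable_feller_not_eProp_on_set_of_positive_measure :
    ∃ κ : ProbabilityTheory.Kernel SVCSpace SVCSpace, IsMarkovKernel κ ∧ IsFeller κ ∧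
      (∃ h0 : (0 : ℝ) ∈ SVCSpace,
        IsAsympStable κ (Measure.dirac (⟨0, h0⟩ : SVCSpace))) ∧
      (1 / 2 : ENNReal) ≤ volume (Subtype.val '' {z : SVCSpace | ¬ EPropCbAt κ z}) ∧
      ¬ ({z : SVCSpace | ¬ EPropCbAt κ z}).Countable := by
  obtain ⟨κ, hκ, hfeller, hstable, hvol, hunc⟩ :=
    exists_asympStable_feller_not_eProp_on_set_of_positive_measure_general (c := 1 / 2)
      (by simp)
  exact ⟨κ, hκ, hfeller, hstable, hvol.le, hunc⟩
end
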